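/- Let d ≥ 1, 1 ≤ p < ∞, 1 ≤ r < ∞ and s > d/r. Set α̃ = 2s/(2s+d) if r > pd/(2s+d), and α̃ = 2(s − d/r + d/p)/(2(s − d/r) + d) otherwise. Then for every ε with 0 < ε < 1 − α̃, the set { c ∈ b^{s,∞}_r : c ∈ W((1−α̃−ε)p, p) } is a Haar-null subset of b^{s,∞}_r. -/

import Mathlib

/-!
`W(w,p) ∩ b^{s,∞}_r` is contained in a Borel *linear* subspace of `b^{s,∞}_r`, so it is Haar-null as
soon as some `g ∈ b^{s,∞}_r` avoids that subspace: the uniform measure on the segment `{t g : 0 ≤ t ≤ 1}`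
charges no translate of it, because two distinct points `t g`, `t' g` of one translate would give
`(t - t') g` in the subspace.

The Borel set is `⋃_C weakSet C`, where `weakSet C` asks that every single level `j` satisfies
`λ^w 2^{j(dp/2-d)} #{k : |c_{j,k}| > λ} ≤ C` for all `λ > 0`. It is closed for the product topology,
by lower semicontinuity of the counting function, hence Borel for the finer Besov topology.
Subtraction is controlled by `#{|c-c'| > λ} ≤ #{|c| > λ/2} + #{|c'| > λ/2}`.

The witness is `g_{j,k} = 2^{-βj} 1_{k ∈ F_j}` with `#F_j = 2^{γj}` and `β = s - d/r + d/2 + γ/r`,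
of Besov norm `1`; it violates the weak bound as soon as `βw < dp/2 - d + γ`. The dense choice
`γ = d` (all `k`) gives the first regime of `α̃`, the sparse choice `γ = 0` (one `k` per level) gives
the second one.
-/

open MeasureTheory
open scoped ENNReal BigOperators

/-- The space of wavelet-type coefficient sequences `c = (c_{j,k})`, `j ∈ ℕ`,
`k ∈ {0,…,2^j−1}^d`. -/
abbrev BSeq (d : ℕ) := (j : ℕ) → (Fin d → Fin (2 ^ j)) → ℝ

/-- The `j`-th term `2^{(s−d/r+d/2)j} (Σ_k |c_{j,k}|^r)^{1/r}` of the Besov quasi-norm. -/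
noncomputable def besovNormAt (d : ℕ) (s r : ℝ) (c : BSeq d) (j : ℕ) : ℝ :=
  (2 : ℝ) ^ ((s - (d : ℝ) / r + (d : ℝ) / 2) * (j : ℝ)) *
    (∑ k : Fin d → Fin (2 ^ j), |c j k| ^ r) ^ (1 / r)

/-- Membership in the Besov sequence space `b^{s,∞}_r`:
`sup_j 2^{(s−d/r+d/2)j} (Σ_k |c_{j,k}|^r)^{1/r} < ∞`. -/
def MemBesov (d : ℕ) (s r : ℝ) (c : BSeq d) : Prop :=
  ∃ C : ℝ, ∀ j : ℕ, besovNormAt d s r c j ≤ C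

/-- The weak Besov quasi-norm
`‖c‖_{W(w,p)} = sup_{λ>0} λ^w Σ_{j≥0} 2^{j(dp/2−d)} #{k : |c_{j,k}| > λ}`, valued in `[0,∞]`. -/
noncomputable def wBesovNorm (d : ℕ) (w p : ℝ) (c : BSeq d) : ℝ≥0∞ :=
  ⨆ lam : Set.Ioi (0 : ℝ),
    ENNReal.ofReal ((lam : ℝ) ^ w) *
      ∑' j : ℕ, ENNReal.ofReal ((2 : ℝ) ^ (((d : ℝ) * p / 2 - (d : ℝ)) * (j : ℝ))) *
        (Nat.card {k : Fin d → Fin (2 ^ j) // (lam : ℝ) < |c j k|} : ℝ≥0∞)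

/-- Membership in the weak Besov sequence space `W(w,p)`. -/
def MemWBesov (d : ℕ) (w p : ℝ) (c : BSeq d) : Prop :=
  wBesovNorm d w p c ≠ ⊤

/-- The Besov sequence space `b^{s,∞}_r` as a type. -/
def BesovSp (d : ℕ) (s r : ℝ) := {c : BSeq d // MemBesov d s r c}

/-- The extended distance on sequences associated with the Besov quasi-norm. -/
noncomputable def besovEDist (d : ℕ) (s r : ℝ) (c c' : BSeq d) : ℝ≥0∞ :=
  ⨆ j : ℕ, ENNReal.ofReal (besovNormAt d s r (c - c') j)

/-- A set `S ⊆ b^{s,∞}_r` is Haar-null (relative to a topology `τ` on `b^{s,∞}_r`) if it is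
contained in a Borel set `A` carrying a compactly supported Borel probability measure `μ`
all of whose translates of `A` are null. -/
def IsHaarNullBesov (d : ℕ) (s r : ℝ) (τ : TopologicalSpace (BesovSp d s r))
    (S : Set (BesovSp d s r)) : Prop :=
  ∃ A : Set (BesovSp d s r), S ⊆ A ∧ MeasurableSet[@borel _ τ] A ∧
    ∃ μ : @Measure (BesovSp d s r) (@borel _ τ),
      @IsProbabilityMeasure _ (@borel _ τ) μ ∧
      (∃ K : Set (BesovSp d s r), @IsCompact _ τ K ∧ μ Kᶜ = 0) ∧
      ∀ x : BesovSp d s r, μ {y : BesovSp d s r | ∃ a ∈ A, y.1 = x.1 + a.1} = 0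

/-- `τ` is the quasi-norm topology of `b^{s,∞}_r`: around every point, the balls of
`besovEDist` form a basis of neighbourhoods. -/
def IsBesovTopology (d : ℕ) (s r : ℝ) (τ : TopologicalSpace (BesovSp d s r)) : Prop :=
  ∀ x : BesovSp d s r, (@nhds _ τ x).HasBasis (fun ε : ℝ≥0∞ => 0 < ε)
    (fun ε => {y : BesovSp d s r | besovEDist d s r x.1 y.1 < ε})

/-- The minimax exponent `α̃`. -/
noncomputable def alphaTilde (d : ℕ) (s r p : ℝ) : ℝ :=
  if p * (d : ℝ) / (2 * s + (d : ℝ)) < r then 2 * s / (2 * s + (d : ℝ))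
  else 2 * (s - (d : ℝ) / r + (d : ℝ) / p) / (2 * (s - (d : ℝ) / r) + (d : ℝ))

/-- The irreducibility index `J(j,k)`: the smallest `J` such that `k = 2^{j−J} K` for some
`K ∈ {0,…,2^J−1}^d`, i.e. the smallest `J` with `2^{j−J} ∣ k_i` for all `i`. -/
def irredIndex (d : ℕ) (j : ℕ) (k : Fin d → Fin (2 ^ j)) : ℕ :=
  Nat.find (p := fun J : ℕ => ∀ i : Fin d, 2 ^ (j - J) ∣ (k i : ℕ)) ⟨j, fun i => by simp⟩

/-- The saturating sequence `g`, with `g_{j,k} = j^{−(1+3/r)} 2^{−(s−d/r+d/2)j} 2^{−(d/r)J(j,k)}`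
for `j ≥ 1` and `g_{0,k} = 0`. -/
noncomputable def gSeq (d : ℕ) (s r : ℝ) : BSeq d := fun j k =>
  if j = 0 then 0
  else (j : ℝ) ^ (-(1 + 3 / r)) * (2 : ℝ) ^ (-(s - (d : ℝ) / r + (d : ℝ) / 2) * (j : ℝ)) *
    (2 : ℝ) ^ (-((d : ℝ) / r) * (irredIndex d j k : ℝ))

/-- The number of coefficients at level `j` exceeding `lam` in absolute value, as a real number. -/
noncomputable def levelCount (d : ℕ) (c : BSeq d) (j : ℕ) (lam : ℝ) : ℝ :=
  ∑ k : Fin d → Fin (2 ^ j), Set.indicator {u : BSeq d | lam < |u j k|} (fun _ => (1 : ℝ)) c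

/-- The sequences whose levels all satisfy the weak Besov bound individually, with constant `C`. -/
def weakSet (d : ℕ) (w p C : ℝ) : Set (BSeq d) :=
  {c | ∀ j : ℕ, ∀ lam : ℝ, 0 < lam →
    lam ^ w * (2 : ℝ) ^ (((d : ℝ) * p / 2 - (d : ℝ)) * (j : ℝ)) * levelCount d c j lam ≤ C}

lemma levelCount_nonneg (d : ℕ) (c : BSeq d) (j : ℕ) (lam : ℝ) : 0 ≤ levelCount d c j lam :=
  Finset.sum_nonneg fun _ _ => Set.indicator_nonneg (fun _ _ => zero_le_one) _

lemma levelCount_eq_card (d : ℕ) (c : BSeq d) (j : ℕ) (lam : ℝ) :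
    levelCount d c j lam = (Nat.card {k : Fin d → Fin (2 ^ j) // lam < |c j k|} : ℝ) := by
  classical
  rw [Nat.card_eq_fintype_card, Fintype.card_subtype]
  simp [levelCount, Set.indicator_apply]

lemma levelCount_sub_le (d : ℕ) (c c' : BSeq d) (j : ℕ) (lam : ℝ) :
    levelCount d (c - c') j lam ≤ levelCount d c j (lam / 2) + levelCount d c' j (lam / 2) := by
  unfold levelCount
  rw [← Finset.sum_add_distrib]
  refine Finset.sum_le_sum fun k _ => ?_
  have := abs_sub (c j k) (c' j k)
  simp only [Set.indicator_apply, Set.mem_ofPred_eq, Pi.sub_apply]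
  split_ifs <;> linarith

lemma isClosed_weakSet (d : ℕ) (w p C : ℝ) : IsClosed (weakSet d w p C) := by
  have hset : weakSet d w p C = ⋂ (j : ℕ) (lam : ℝ) (_ : 0 < lam),
      (fun c => levelCount d c j lam) ⁻¹'
        Set.Iic (C / (lam ^ w * (2 : ℝ) ^ (((d : ℝ) * p / 2 - (d : ℝ)) * (j : ℝ)))) := by
    ext c
    simp only [weakSet, Set.mem_ofPred_eq, Set.mem_iInter, Set.mem_preimage, Set.mem_Iic]
    refine forall_congr' fun j => forall_congr' fun lam => forall_congr' fun hl => ?_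
    rw [le_div_iff₀ (by positivity), mul_comm]
  rw [hset]
  refine isClosed_iInter fun j => isClosed_iInter fun lam => isClosed_iInter fun _ => ?_
  refine LowerSemicontinuous.isClosed_preimage ?_ _
  refine lowerSemicontinuous_sum fun k _ => ?_
  refine IsOpen.lowerSemicontinuous_indicator ?_ zero_le_one
  exact isOpen_lt continuous_const (by fun_prop)

lemma mem_weakSet_of_memWBesov {d : ℕ} {w p : ℝ} {c : BSeq d} (h : MemWBesov d w p c) :
    ∃ n : ℕ, c ∈ weakSet d w p n := by
  obtain ⟨n, hn⟩ := exists_nat_ge (wBesovNorm d w p c).toReal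
  refine ⟨n, fun j lam hl => le_trans ?_ hn⟩
  have h0 := levelCount_nonneg d c j lam
  refine (ENNReal.ofReal_le_iff_le_toReal h).1 ?_
  rw [mul_assoc, ENNReal.ofReal_mul (by positivity), ENNReal.ofReal_mul (by positivity),
    levelCount_eq_card, ENNReal.ofReal_natCast]
  refine le_trans ?_ (le_iSup _ (⟨lam, hl⟩ : Set.Ioi (0 : ℝ)))
  gcongr
  exact ENNReal.le_tsum (f := fun j : ℕ =>
    ENNReal.ofReal ((2 : ℝ) ^ (((d : ℝ) * p / 2 - (d : ℝ)) * (j : ℝ))) *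
        (Nat.card {k : Fin d → Fin (2 ^ j) // lam < |c j k|} : ℝ≥0∞)) j

lemma sub_mem_weakSet {d : ℕ} {w p C C' : ℝ} {c c' : BSeq d} (h : c ∈ weakSet d w p C)
    (h' : c' ∈ weakSet d w p C') : c - c' ∈ weakSet d w p (2 ^ w * (C + C')) := by
  intro j lam hl
  have h1 := h j (lam / 2) (by positivity)
  have h2 := h' j (lam / 2) (by positivity)
  have hw : lam ^ w = 2 ^ w * (lam / 2) ^ w := by
    rw [← Real.mul_rpow (by norm_num) (by positivity)]
    congr 1
    ring
  calc _ ≤ lam ^ w * (2 : ℝ) ^ (((d : ℝ) * p / 2 - (d : ℝ)) * (j : ℝ)) *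
        (levelCount d c j (lam / 2) + levelCount d c' j (lam / 2)) := by
          gcongr
          exact levelCount_sub_le d c c' j lam
    _ = 2 ^ w * ((lam / 2) ^ w * (2 : ℝ) ^ (((d : ℝ) * p / 2 - (d : ℝ)) * (j : ℝ)) *
        levelCount d c j (lam / 2) +
        (lam / 2) ^ w * (2 : ℝ) ^ (((d : ℝ) * p / 2 - (d : ℝ)) * (j : ℝ)) *
        levelCount d c' j (lam / 2)) := by rw [hw]; ring
    _ ≤ _ := by gcongr

/-- A sequence of constant size `2^{-βj}` on `2^{γj}` positions per level,
with `β = s - d/r + d/2 + γ/r` chosen so that it has Besov norm `1`. If `βw < dp/2 - d + γ`, no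
nonzero multiple of it lies in any `weakSet`. -/
lemma exists_witness (d : ℕ) (s r p w γ : ℝ) (hr : 1 ≤ r)
    (F : (j : ℕ) → Finset (Fin d → Fin (2 ^ j)))
    (hF : ∀ j : ℕ, ((F j).card : ℝ) = 2 ^ (γ * (j : ℝ)))
    (hw : (s - (d : ℝ) / r + (d : ℝ) / 2 + γ / r) * w < (d : ℝ) * p / 2 - d + γ) :
    ∃ g : BSeq d, MemBesov d s r g ∧ ∀ t : ℝ, t ≠ 0 → ∀ C : ℝ, t • g ∉ weakSet d w p C := by
  classical
  set β := s - (d : ℝ) / r + (d : ℝ) / 2 + γ / r with hβ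
  have hr0 : 0 < r := by linarith
  refine ⟨fun j k => if k ∈ F j then 2 ^ (-β * (j : ℝ)) else 0, ⟨1, fun j => le_of_eq ?_⟩, ?_⟩
  · have h1 : ∀ k : Fin d → Fin (2 ^ j),
        |if k ∈ F j then (2 : ℝ) ^ (-β * (j : ℝ)) else 0| ^ r
          = if k ∈ F j then (2 : ℝ) ^ (-β * j * r) else 0 := by
      intro k
      split_ifs
      · rw [abs_of_pos (by positivity), ← Real.rpow_mul (by norm_num)]
      · rw [abs_zero, Real.zero_rpow hr0.ne']
    simp only [besovNormAt, h1]
    rw [Finset.sum_ite_mem, Finset.univ_inter, Finset.sum_const, nsmul_eq_mul, hF,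
      ← Real.rpow_add (by norm_num), ← Real.rpow_mul (by norm_num), ← Real.rpow_add (by norm_num)]
    rw [show (s - (d : ℝ) / r + (d : ℝ) / 2) * (j : ℝ) + (γ * j + -β * j * r) * (1 / r) = 0 by
      rw [hβ]; field_simp; ring, Real.rpow_zero]
  · intro t ht C hC
    have ht' : 0 < |t| := abs_pos.2 ht
    set η := (d : ℝ) * p / 2 - d + γ - β * w with hη
    have hη0 : 0 < η := by linarith
    -- the weak bound at `λ = |t| 2^{-βj} / 2` reads `(|t|/2)^w 2^{ηj} ≤ C`, for every `j`
    have key : ∀ j : ℕ, (|t| / 2) ^ w * ((2 : ℝ) ^ η) ^ j ≤ C := by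
      intro j
      refine le_trans (le_of_eq ?_) (hC j (|t| / 2 * 2 ^ (-β * (j : ℝ))) (by positivity))
      have hcount : levelCount d (t • fun j k => if k ∈ F j then (2 : ℝ) ^ (-β * (j : ℝ)) else 0) j
          (|t| / 2 * 2 ^ (-β * (j : ℝ))) = 2 ^ (γ * (j : ℝ)) := by
        rw [← hF, Finset.card_eq_sum_ones, levelCount]
        push_cast
        rw [← Finset.univ_inter (F j), ← Finset.sum_ite_mem]
        refine Finset.sum_congr rfl fun k _ => ?_
        have hpos : 0 < |t| * (2 : ℝ) ^ (-β * (j : ℝ)) := by positivity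
        by_cases hk : k ∈ F j
        · rw [Set.indicator_of_mem, if_pos hk]
          simp only [Set.mem_ofPred_eq, Pi.smul_apply, smul_eq_mul, if_pos hk, abs_mul]
          rw [abs_of_pos (show (0 : ℝ) < 2 ^ (-β * (j : ℝ)) by positivity)]
          linarith
        · rw [Set.indicator_of_notMem, if_neg hk]
          simp only [Set.mem_ofPred_eq, Pi.smul_apply, smul_eq_mul, if_neg hk, mul_zero, abs_zero]
          linarith
      rw [hcount, Real.mul_rpow (by positivity) (by positivity), ← Real.rpow_natCast,
        ← Real.rpow_mul (by norm_num), ← Real.rpow_mul (by norm_num), mul_assoc, mul_assoc,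
        ← Real.rpow_add (by norm_num), ← Real.rpow_add (by norm_num)]
      congr 2
      rw [hη]
      ring
    obtain ⟨j, hj⟩ := pow_unbounded_of_one_lt (C / (|t| / 2) ^ w)
      (Real.one_lt_rpow (by norm_num : (1 : ℝ) < 2) hη0)
    rw [div_lt_iff₀ (by positivity)] at hj
    linarith [key j]

lemma exists_witness_alphaTilde (d : ℕ) (hd : 1 ≤ d) (p r s ε : ℝ) (hp : 1 ≤ p) (hr : 1 ≤ r)
    (hs : (d : ℝ) / r < s) (hε : 0 < ε) :
    ∃ g : BSeq d, MemBesov d s r g ∧ ∀ t : ℝ, t ≠ 0 → ∀ C : ℝ,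
      t • g ∉ weakSet d ((1 - alphaTilde d s r p - ε) * p) p C := by
  have hd' : (1 : ℝ) ≤ d := by exact_mod_cast hd
  have hdr : 0 < (d : ℝ) / r := by positivity
  unfold alphaTilde
  split_ifs with h
  · refine exists_witness d s r p _ d hr (fun j => Finset.univ) (fun j => ?_) ?_
    · rw [Finset.card_univ, Fintype.card_fun, Fintype.card_fin, Fintype.card_fin, ← pow_mul,
        mul_comm, ← Nat.cast_mul, Real.rpow_natCast]
      norm_num
    · have hpos : 0 < 2 * s + (d : ℝ) := by linarith
      have : (s - (d : ℝ) / r + (d : ℝ) / 2 + d / r) *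
          ((1 - 2 * s / (2 * s + (d : ℝ)) - ε) * p)
          = (d : ℝ) * p / 2 - d + d - (2 * s + d) / 2 * (ε * p) := by
        have h1 : 1 - 2 * s / (2 * s + (d : ℝ)) = d / (2 * s + d) := by
          rw [eq_div_iff hpos.ne', sub_mul, div_mul_cancel₀ _ hpos.ne']
          ring
        rw [h1, show s - (d : ℝ) / r + (d : ℝ) / 2 + d / r = (2 * s + d) / 2 by ring]
        generalize 2 * s + (d : ℝ) = D at hpos
        field_simp
        ring
      rw [this]
      have : 0 < (2 * s + (d : ℝ)) / 2 * (ε * p) := by positivity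
      linarith
  · refine exists_witness d s r p _ 0 hr (fun j => {fun _ => ⟨0, by positivity⟩})
      (fun j => by simp) ?_
    have hpos : 0 < 2 * (s - (d : ℝ) / r) + (d : ℝ) := by linarith
    set D := 2 * (s - (d : ℝ) / r) + (d : ℝ) with hD
    have h1 : s - (d : ℝ) / r + (d : ℝ) / 2 + 0 / r = D / 2 := by rw [hD]; ring
    have h2 : 2 * (s - (d : ℝ) / r + (d : ℝ) / p) = D - d + 2 * (d / p) := by rw [hD]; ring
    have : D / 2 * ((1 - (D - d + 2 * ((d : ℝ) / p)) / D - ε) * p)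
          = (d : ℝ) * p / 2 - d + 0 - D / 2 * (ε * p) := by
      field_simp
      ring
    rw [h1, h2, this]
    have : 0 < D / 2 * (ε * p) := by positivity
    linarith

/-- A single coefficient is dominated by the Besov quasi-norm of its level. -/
lemma abs_le_besovNormAt (d : ℕ) (s r : ℝ) (hr : 1 ≤ r) (c : BSeq d) (j : ℕ)
    (k : Fin d → Fin (2 ^ j)) :
    (2 : ℝ) ^ ((s - (d : ℝ) / r + (d : ℝ) / 2) * (j : ℝ)) * |c j k| ≤ besovNormAt d s r c j := by
  have hr0 : 0 < r := by linarith
  unfold besovNormAt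
  gcongr
  calc |c j k| = (|c j k| ^ r) ^ (1 / r) := by
        rw [← Real.rpow_mul (abs_nonneg _), mul_one_div_cancel hr0.ne', Real.rpow_one]
    _ ≤ _ := by
        gcongr
        exact Finset.single_le_sum (f := fun k => |c j k| ^ r)
          (fun _ _ => by positivity) (Finset.mem_univ k)

lemma besovNormAt_smul (d : ℕ) (s r : ℝ) (hr : 1 ≤ r) (t : ℝ) (c : BSeq d) (j : ℕ) :
    besovNormAt d s r (t • c) j = |t| * besovNormAt d s r c j := by
  have hr0 : 0 < r := by linarith
  simp only [besovNormAt, Pi.smul_apply, smul_eq_mul, abs_mul]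
  simp_rw [Real.mul_rpow (abs_nonneg t) (abs_nonneg _)]
  rw [← Finset.mul_sum, Real.mul_rpow (by positivity) (Finset.sum_nonneg fun _ _ => by positivity),
    ← Real.rpow_mul (abs_nonneg _), mul_one_div_cancel hr0.ne', Real.rpow_one]
  ring

/-- The Besov topology is finer than the product topology. -/
lemma continuous_besov_val {d : ℕ} {s r : ℝ} (hr : 1 ≤ r) {τ : TopologicalSpace (BesovSp d s r)}
    (hτ : IsBesovTopology d s r τ) : Continuous (fun c : BesovSp d s r => c.1) := by
  refine continuous_pi fun j => continuous_pi fun k => continuous_iff_continuousAt.2 fun x => ?_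
  refine ((hτ x).tendsto_iff Metric.nhds_basis_ball).2 fun ε hε => ?_
  set B := (2 : ℝ) ^ ((s - (d : ℝ) / r + (d : ℝ) / 2) * (j : ℝ)) with hB
  have hB0 : 0 < B := by positivity
  refine ⟨ENNReal.ofReal (B * ε), by simpa using mul_pos hB0 hε, fun y hy => ?_⟩
  have h1 := abs_le_besovNormAt d s r hr (x.1 - y.1) j k
  have h2 : ENNReal.ofReal (besovNormAt d s r (x.1 - y.1) j) < ENNReal.ofReal (B * ε) :=
    lt_of_le_of_lt (le_iSup (fun j => ENNReal.ofReal (besovNormAt d s r (x.1 - y.1) j)) j) hy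
  have h3 := (ENNReal.ofReal_lt_ofReal_iff (mul_pos hB0 hε)).1 h2
  have h4 := lt_of_mul_lt_mul_left (h1.trans_lt h3) hB0.le
  rw [Metric.mem_ball, dist_comm, Real.dist_eq]
  exact h4

lemma MemBesov.smul {d : ℕ} {s r : ℝ} (hr : 1 ≤ r) {g : BSeq d} (hg : MemBesov d s r g) (t : ℝ) :
    MemBesov d s r (t • g) := by
  obtain ⟨C, hC⟩ := hg
  refine ⟨|t| * C, fun j => ?_⟩
  rw [besovNormAt_smul d s r hr]
  gcongr
  exact hC j

/-- The line `t ↦ t g` in `b^{s,∞}_r`. -/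
def besovLine {d : ℕ} {s r : ℝ} (hr : 1 ≤ r) {g : BSeq d} (hg : MemBesov d s r g) (t : ℝ) :
    BesovSp d s r :=
  ⟨t • g, hg.smul hr t⟩

lemma continuous_besovLine {d : ℕ} {s r : ℝ} (hr : 1 ≤ r) {τ : TopologicalSpace (BesovSp d s r)}
    (hτ : IsBesovTopology d s r τ) {g : BSeq d} (hg : MemBesov d s r g) :
    Continuous (besovLine hr hg) := by
  obtain ⟨C, hC⟩ := id hg
  refine continuous_iff_continuousAt.2 fun t => ?_
  refine (hτ _).tendsto_right_iff.2 fun ε hε => ?_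
  have hlim : Filter.Tendsto (fun u : ℝ => ENNReal.ofReal (|t - u| * C)) (nhds t) (nhds 0) := by
    have hc : Continuous (fun u : ℝ => ENNReal.ofReal (|t - u| * C)) :=
      ENNReal.continuous_ofReal.comp (by fun_prop)
    simpa using hc.tendsto t
  filter_upwards [hlim.eventually_lt_const hε] with u hu
  refine lt_of_le_of_lt (iSup_le fun j => ENNReal.ofReal_le_ofReal ?_) hu
  change besovNormAt d s r (t • g - u • g) j ≤ _
  rw [← sub_smul, besovNormAt_smul d s r hr]
  gcongr
  exact hC j

/-- For `1 ≤ p < ∞`, `1 ≤ r < ∞`, `s > d/r` and `0 < ε < 1 − α̃`, the set of elements of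
`b^{s,∞}_r` belonging to the weak Besov space `W((1−α̃−ε)p, p)` is Haar-null in `b^{s,∞}_r`. -/
theorem wBesov_haarNull (d : ℕ) (hd : 1 ≤ d) (p r s : ℝ) (hp : 1 ≤ p) (hr : 1 ≤ r)
    (hs : (d : ℝ) / r < s)
    (τ : TopologicalSpace (BesovSp d s r)) (hτ : IsBesovTopology d s r τ)
    (ε : ℝ) (hε1 : 0 < ε) (hε2 : ε < 1 - alphaTilde d s r p) :
    IsHaarNullBesov d s r τ
      {c : BesovSp d s r |
        MemWBesov d ((1 - alphaTilde d s r p - ε) * p) p c.1} := by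
  classical
  obtain ⟨g, hg, hgW⟩ := exists_witness_alphaTilde d hd p r s ε hp hr hs hε1
  set w := (1 - alphaTilde d s r p - ε) * p
  let : TopologicalSpace (BesovSp d s r) := τ
  let : MeasurableSpace (BesovSp d s r) := borel _
  have : BorelSpace (BesovSp d s r) := ⟨rfl⟩
  have hval : Continuous (fun c : BesovSp d s r => c.1) := continuous_besov_val hr hτ
  have : T2Space (BesovSp d s r) := T2Space.of_injective_continuous Subtype.val_injective hval
  set f : ℝ → BesovSp d s r := besovLine hr hg with hf
  have hfc : Continuous f := continuous_besovLine hr hτ hg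
  have hfm : Measurable f := hfc.measurable
  have hfinj : Function.Injective f := by
    intro t u htu
    by_contra hne
    have h0 : (t - u) • g = (0 : ℝ) • g := by
      have h1 : t • g = u • g := congrArg Subtype.val htu
      rw [sub_smul, h1, sub_self, zero_smul]
    refine hgW (t - u) (sub_ne_zero.2 hne) 0 fun j lam hl => ?_
    have : levelCount d ((t - u) • g) j lam = 0 := by
      rw [h0]
      refine Finset.sum_eq_zero fun k _ => Set.indicator_of_notMem ?_ _
      simpa using hl.le
    rw [this, mul_zero]
  set K : Set (BesovSp d s r) := f '' Set.Icc 0 1 with hK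
  have hKc : IsCompact K := isCompact_Icc.image hfc
  set μ : Measure (BesovSp d s r) := Measure.map f (volume.restrict (Set.Icc 0 1)) with hμ
  have hμK : μ Kᶜ = 0 := by
    rw [hμ, Measure.map_apply hfm hKc.isClosed.measurableSet.compl]
    refine measure_mono_null (t := (Set.Icc (0 : ℝ) 1)ᶜ)
      (fun t ht h => ht (Set.mem_image_of_mem f h)) ?_
    rw [Measure.restrict_apply measurableSet_Icc.compl]
    simp
  refine ⟨⋃ n : ℕ, (fun c : BesovSp d s r => c.1) ⁻¹' weakSet d w p n, ?_, ?_, μ, ?_,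
    ⟨K, hKc, hμK⟩, fun x => ?_⟩
  · intro c hc
    obtain ⟨n, hn⟩ := mem_weakSet_of_memWBesov hc
    exact Set.mem_iUnion.2 ⟨n, hn⟩
  · exact MeasurableSet.iUnion fun n => ((isClosed_weakSet d w p n).preimage hval).measurableSet
  · have : IsProbabilityMeasure (volume.restrict (Set.Icc (0 : ℝ) 1)) := ⟨by simp⟩
    exact Measure.isProbabilityMeasure_map hfm.aemeasurable
  · set T : Set (BesovSp d s r) := {y | ∃ a ∈ ⋃ n : ℕ,
      (fun c : BesovSp d s r => c.1) ⁻¹' weakSet d w p n, y.1 = x.1 + a.1} with hT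
    -- the segment meets each translate in at most one point, and `μ` has no atoms
    have hsub : (T ∩ K).Subsingleton := by
      rintro _ ⟨⟨a, ha, hya⟩, t, -, rfl⟩ _ ⟨⟨b, hb, hyb⟩, u, -, rfl⟩
      obtain ⟨n, hn⟩ := Set.mem_iUnion.1 ha
      obtain ⟨m, hm⟩ := Set.mem_iUnion.1 hb
      by_contra hne
      have htu : t - u ≠ 0 := sub_ne_zero.2 fun h => hne (congrArg f h)
      refine hgW (t - u) htu (2 ^ w * (n + m)) ?_
      have : (t - u) • g = a.1 - b.1 := by
        have h1 : t • g = x.1 + a.1 := hya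
        have h2 : u • g = x.1 + b.1 := hyb
        rw [sub_smul, h1, h2, add_sub_add_left_eq_sub]
      rw [this]
      exact sub_mem_weakSet hn hm
    have hTK : μ (T ∩ K) = 0 := by
      rw [hμ, Measure.map_apply hfm hsub.measurableSet]
      exact (hsub.preimage hfinj).measure_zero _
    refine measure_mono_null (t := (T ∩ K) ∪ Kᶜ) ?_ (measure_union_null hTK hμK)
    intro y hy
    by_cases h : y ∈ K
    · exact Or.inl ⟨hy, h⟩
    · exact Or.inr h
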